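/- arXiv:1907.11998 — 2 statements merged into one kernel-verified Lean document; each statement's English description precedes it below -/
import Mathlib

section
/- Let n ≥ 1 be an integer, δ > 0, and β = n. Define the extended multiplier m(r) = −r² ₂F₃(1, 1; 2, (n+2)/2, 2; −r²δ²/4). Then lim_{r→∞} [ m(r) + (2n/δ²)( 2 log r + log(δ²/4) + γ − ψ(n/2) ) ] = 0, where γ is the Euler–Mascheroni constant and ψ(x) = Γ′(x)/Γ(x) is the digamma function. -/
/-!
Write `c = n / 2 ≥ 1/2` and `x = r² δ² / 4`. The multiplier equals `(2 n / δ²) F_c(x)` with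
`F_c(x) = ∑_{j ≥ 1} (-x) ^ j / (j j! (c)_j)` (`neg_sq_mul_hyp2F3`), so the claim is
`F_c(x) + log x → ψ(c) - γ` (`prim_tendsto`). There are two steps.

*The limit exists.* One has `x F_c'(x) = f_c(x) - 1` with `f_c(x) = ₀F₁(; c; -x)`, and
`x f_c'' + c f_c' + f_c = 0`. For `c ≥ 1/2` the energy `x f_c' ^ 2 + f_c ^ 2` is nonincreasing, and
`f_c' = -f_{c+1} / c`, so `f_{c+1}(x) = O(x ^ (-1/2))` (`bessel_sq_le`). Hence the derivative
`f_{c+1}(x) / x` of `F_{c+1}(x) + log x` is integrable at infinity, and since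
`F_{c+1} - F_c = -(f_{c+1} - 1) / c` the limit exists for `c` as well
(`exists_tendsto_prim_add_log`).

*Its value.* Average `F_c(t y) + log (t y)` over `y` with the weight `exp (-y) y ^ (c - 1)` and let
`t → ∞`. By dominated convergence the result tends to `Γ(c)` times the limit. Termwise integration
(`gamma_average_prim`) shows that it equals `Γ(c) (log t - Ein(t)) + Γ'(c)`, and `Ein(t) - log t → γ`
(`ein_tendsto`). So the limit is `Γ'(c) / Γ(c) - γ`.
-/

open MeasureTheory Real Filter
open scoped Topology

/-- The rising Pochhammer symbol `(q)_k = q (q+1) ⋯ (q+k-1)`. -/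
noncomputable def poch (q : ℝ) (k : ℕ) : ℝ := (ascPochhammer ℝ k).eval q

/-- The generalized hypergeometric series `₂F₃(a₁,a₂; b₁,b₂,b₃; x)`. -/
noncomputable def hyp2F3 (a₁ a₂ b₁ b₂ b₃ x : ℝ) : ℝ :=
  ∑' k : ℕ, (poch a₁ k * poch a₂ k) /
    (poch b₁ k * poch b₂ k * poch b₃ k * (Nat.factorial k : ℝ)) * x ^ k

/-- The digamma function `ψ(x) = Γ′(x)/Γ(x)`. -/
noncomputable def digamma (x : ℝ) : ℝ := deriv Real.Gamma x / Real.Gamma x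

/-! ### Entire power series -/

/-- The sum `∑ a_j x ^ j` of a real power series. It is only used for coefficients that are
`O(1 / j!)`, for which the series converges everywhere. -/
noncomputable def pser (a : ℕ → ℝ) (x : ℝ) : ℝ := ∑' j : ℕ, a j * x ^ j

lemma pser_summable {a : ℕ → ℝ} {M : ℝ} (h : ∀ j, |a j| ≤ M / (Nat.factorial j : ℝ)) (x : ℝ) :
    Summable fun j => a j * x ^ j := by
  refine Summable.of_norm_bounded ((Real.summable_pow_div_factorial |x|).mul_left M) fun j => ?_
  rw [norm_mul, norm_pow, Real.norm_eq_abs, Real.norm_eq_abs]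
  calc |a j| * |x| ^ j ≤ M / (Nat.factorial j : ℝ) * |x| ^ j := by gcongr; exact h j
    _ = _ := by ring

/-- Term-by-term differentiation. The derived coefficients satisfy the same bound `M / j!`. -/
lemma pser_hasDerivAt {a : ℕ → ℝ} {M : ℝ} (h : ∀ j, |a j| ≤ M / (Nat.factorial j : ℝ)) (x : ℝ) :
    HasDerivAt (pser a) (pser (fun j => (j + 1) * a (j + 1)) x) x := by
  have hM : 0 ≤ M := by simpa using (abs_nonneg _).trans (h 0)
  have hb : ∀ j : ℕ, |((j : ℝ) + 1) * a (j + 1)| ≤ M / (Nat.factorial j : ℝ) := by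
    intro j
    rw [abs_mul, abs_of_pos (by positivity : (0 : ℝ) < (j : ℝ) + 1)]
    calc ((j : ℝ) + 1) * |a (j + 1)| ≤ ((j : ℝ) + 1) * (M / (Nat.factorial (j + 1) : ℝ)) := by
          gcongr; exact h (j + 1)
      _ = _ := by rw [Nat.factorial_succ]; push_cast; field_simp
  -- differentiate on a ball, where the derived series is dominated by the exponential series at R
  set R : ℝ := |x| + 1
  have hmain := hasDerivAt_tsum_of_isPreconnected (𝕜 := ℝ)
    (u := fun j => M * (R ^ (j - 1) / (Nat.factorial (j - 1) : ℝ)))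
    (g := fun j y => a j * y ^ j) (g' := fun j y => a j * (j * y ^ (j - 1)))
    (t := Metric.ball (0 : ℝ) R) (y₀ := x) (y := x) ?_ Metric.isOpen_ball
    (convex_ball _ _).isPreconnected (fun j y _ => (hasDerivAt_pow j y).const_mul _) ?_
    (by simp [R]) (pser_summable h x) (by simp [R])
  · refine (hmain.congr_deriv ?_)
    rw [pser, tsum_eq_zero_add']
    · simp only [CharP.cast_eq_zero, zero_mul, mul_zero, zero_add, Nat.cast_add, Nat.cast_one,
        Nat.add_sub_cancel]
      exact tsum_congr fun j => by ring
    · refine (pser_summable hb x).congr fun j => ?_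
      simp; ring
  · rw [← summable_nat_add_iff 1]
    exact (Real.summable_pow_div_factorial R).mul_left M
  · intro j y hy
    rcases j with _ | j
    · simp; exact hM
    · have hy' : |y| ≤ R := by simpa using (Metric.mem_ball.1 hy).le
      have := hb j
      rw [abs_mul] at this
      simp only [Nat.add_sub_cancel, norm_mul, norm_pow, Real.norm_eq_abs]
      push_cast
      calc |a (j + 1)| * (|(j : ℝ) + 1| * |y| ^ j) = |(j : ℝ) + 1| * |a (j + 1)| * |y| ^ j := by ring
        _ ≤ M / (Nat.factorial j : ℝ) * R ^ j := by gcongr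
        _ = _ := by ring

/-! ### Pochhammer symbols -/

lemma poch_succ_left (c : ℝ) (j : ℕ) : poch c (j + 1) = c * poch (c + 1) j := by
  simp [poch, ascPochhammer_succ_left, Polynomial.eval_comp]

lemma poch_succ_right (c : ℝ) (j : ℕ) : poch c (j + 1) = poch c j * (c + j) := by
  simp [poch, ascPochhammer_succ_eval]

lemma poch_zero (c : ℝ) : poch c 0 = 1 := by simp [poch]

lemma poch_pos {c : ℝ} (hc : 0 < c) (j : ℕ) : 0 < poch c j := ascPochhammer_pos j c hc

lemma one_le_poch {c : ℝ} (hc : 1 ≤ c) (j : ℕ) : 1 ≤ poch c j := by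
  induction j with
  | zero => simp [poch_zero]
  | succ j ih =>
    rw [poch_succ_right]
    have : (0 : ℝ) ≤ j := j.cast_nonneg
    nlinarith

lemma half_le_poch {c : ℝ} (hc : 1 / 2 ≤ c) (j : ℕ) : 1 / 2 ≤ poch c j := by
  rcases j with _ | j
  · rw [poch_zero]; norm_num
  · rw [poch_succ_left]
    have := one_le_poch (c := c + 1) (by linarith) j
    nlinarith

lemma Gamma_add_nat_eq_poch {c : ℝ} (hc : 0 < c) (j : ℕ) :
    Real.Gamma (c + j) = poch c j * Real.Gamma c := by
  induction j with
  | zero => simp [poch_zero]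
  | succ j ih =>
    have : (0 : ℝ) ≤ j := j.cast_nonneg
    rw [poch_succ_right, Nat.cast_succ, ← add_assoc, Real.Gamma_add_one (by positivity), ih]
    ring

lemma poch_one (k : ℕ) : poch 1 k = (Nat.factorial k : ℝ) := by
  simp [poch, ascPochhammer_eval_one]

lemma poch_two (k : ℕ) : poch 2 k = (Nat.factorial (k + 1) : ℝ) := by
  have := poch_succ_left 1 k
  rw [poch_one] at this
  rw [this]; norm_num

/-! ### The series and their differential relations -/

/-- Coefficients of `₀F₁(; c; -x)`, that is, of `Γ(c) x ^ ((1 - c) / 2) J_{c - 1}(2 √x)`. -/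
noncomputable def besselCoeff (c : ℝ) (j : ℕ) : ℝ := (-1) ^ j / ((Nat.factorial j : ℝ) * poch c j)

/-- Coefficients of the primitive `F_c(x) = ∫₀ˣ (₀F₁(; c; -u) - 1) / u du`. The constant term is `0`
thanks to the convention `1 / 0 = 0`. -/
noncomputable def primCoeff (c : ℝ) (j : ℕ) : ℝ :=
  (-1) ^ j / ((j : ℝ) * (Nat.factorial j : ℝ) * poch c j)

/-- Coefficients of `-Ein(x) = ∫₀ˣ (exp (-u) - 1) / u du`; again the constant term is `1 / 0 = 0`. -/
noncomputable def einCoeff (j : ℕ) : ℝ := (-1) ^ j / ((j : ℝ) * (Nat.factorial j : ℝ))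

lemma abs_besselCoeff_le {c : ℝ} (hc : 1 / 2 ≤ c) (j : ℕ) :
    |besselCoeff c j| ≤ 2 / (Nat.factorial j : ℝ) := by
  have h := half_le_poch hc j
  have hf : (0 : ℝ) < Nat.factorial j := by positivity
  rw [besselCoeff, abs_div, abs_pow, abs_neg, abs_one, one_pow,
    abs_of_pos (mul_pos hf (by linarith)), div_le_div_iff₀ (mul_pos hf (by linarith)) hf]
  nlinarith

lemma abs_primCoeff_le {c : ℝ} (hc : 1 / 2 ≤ c) (j : ℕ) :
    |primCoeff c j| ≤ 2 / (Nat.factorial j : ℝ) := by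
  rcases j with _ | j
  · simp [primCoeff]
  · have : primCoeff c (j + 1) = besselCoeff c (j + 1) / ((j : ℝ) + 1) := by
      rw [primCoeff, besselCoeff]; push_cast; field_simp
    rw [this, abs_div, abs_of_pos (by positivity : (0 : ℝ) < (j : ℝ) + 1)]
    refine (div_le_self (abs_nonneg _) ?_).trans (abs_besselCoeff_le hc _)
    linarith [(j.cast_nonneg : (0 : ℝ) ≤ j)]

lemma abs_einCoeff_le (j : ℕ) : |einCoeff j| ≤ 1 / (Nat.factorial j : ℝ) := by
  rcases j with _ | j
  · simp [einCoeff]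
  · rw [einCoeff, abs_div, abs_pow, abs_neg, abs_one, one_pow,
      abs_of_pos (by positivity)]
    apply one_div_le_one_div_of_le (by positivity)
    have : (0 : ℝ) ≤ (j : ℝ) * (Nat.factorial (j + 1) : ℝ) := by positivity
    push_cast at *
    nlinarith

lemma pser_congr {a b : ℕ → ℝ} (h : ∀ j, a j = b j) (x : ℝ) : pser a x = pser b x := by
  rw [funext h]

lemma besselCoeff_succ {c : ℝ} (hc : 0 < c) (j : ℕ) :
    ((j : ℝ) + 1) * besselCoeff c (j + 1) = -(1 / c) * besselCoeff (c + 1) j := by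
  have := poch_pos (c := c + 1) (by linarith) j
  rw [besselCoeff, besselCoeff, poch_succ_left, Nat.factorial_succ]
  push_cast
  field_simp
  ring

lemma bessel_hasDerivAt {c : ℝ} (hc : 1 / 2 ≤ c) (x : ℝ) :
    HasDerivAt (pser (besselCoeff c)) (-(1 / c) * pser (besselCoeff (c + 1)) x) x := by
  refine (pser_hasDerivAt (abs_besselCoeff_le hc) x).congr_deriv ?_
  rw [pser_congr (besselCoeff_succ (by linarith)), pser, pser, ← tsum_mul_left]
  exact tsum_congr fun j => by ring

lemma pser_zero (a : ℕ → ℝ) : pser a 0 = a 0 := by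
  rw [pser, tsum_eq_single 0 (fun j hj => by simp [hj])]; simp

lemma pser_eq_zero_add {a : ℕ → ℝ} {M : ℝ} (h : ∀ j, |a j| ≤ M / (Nat.factorial j : ℝ)) (x : ℝ) :
    pser a x = a 0 + x * pser (fun j => a (j + 1)) x := by
  rw [pser, (pser_summable h x).tsum_eq_zero_add, pser, ← tsum_mul_left]
  simp only [pow_zero, mul_one]
  congr 1
  exact tsum_congr fun j => by ring

/-- Contiguous relation `₀F₁(; c) = ₀F₁(; c + 1) - x / (c (c + 1)) ₀F₁(; c + 2)` at `-x`. Together with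
`bessel_hasDerivAt` it is the differential equation `x y'' + c y' + y = 0`. -/
lemma bessel_contiguous {c : ℝ} (hc : 1 / 2 ≤ c) (x : ℝ) :
    x * pser (besselCoeff (c + 2)) x =
      c * (c + 1) * (pser (besselCoeff (c + 1)) x - pser (besselCoeff c) x) := by
  have hc0 : 0 < c := by linarith
  rw [pser_eq_zero_add (abs_besselCoeff_le hc), pser_eq_zero_add (abs_besselCoeff_le (c := c + 1) (by linarith))]
  have e0 : besselCoeff (c + 1) 0 = besselCoeff c 0 := by simp [besselCoeff, poch_zero]
  have s1 : Summable fun j => besselCoeff c (j + 1) * x ^ j := by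
    refine pser_summable (M := 2) (fun j => (abs_besselCoeff_le hc _).trans ?_) x
    gcongr; omega
  have s2 : Summable fun j => besselCoeff (c + 1) (j + 1) * x ^ j := by
    refine pser_summable (M := 2) (fun j => (abs_besselCoeff_le (by linarith) _).trans ?_) x
    gcongr; omega
  rw [e0, add_sub_add_left_eq_sub, ← mul_sub, pser, pser, pser, ← s2.tsum_sub s1, mul_left_comm]
  congr 1
  rw [← tsum_mul_left]
  refine tsum_congr fun j => ?_
  have hp := poch_pos (c := c + 1 + 1) (by linarith) j
  have hj : (0 : ℝ) ≤ j := j.cast_nonneg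
  have hpp : poch (c + 1) (j + 1) = (c + 1) * poch (c + 1 + 1) j := poch_succ_left _ _
  have hq : poch c (j + 1) * (c + (j + 1)) = c * ((c + 1) * poch (c + 1 + 1) j) := by
    rw [← hpp, ← poch_succ_left, poch_succ_right c (j + 1)]; push_cast; ring
  have hq' : poch c (j + 1) = c * ((c + 1) * poch (c + 1 + 1) j) / (c + (j + 1)) := by
    rw [← hq]; field_simp
  have e2 : c + 2 = c + 1 + 1 := by ring
  rw [besselCoeff, besselCoeff, besselCoeff, hpp, hq', e2, Nat.factorial_succ]
  push_cast
  field_simp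
  ring

lemma prim_hasDerivAt {c : ℝ} (hc : 1 / 2 ≤ c) {x : ℝ} (hx : x ≠ 0) :
    HasDerivAt (pser (primCoeff c)) ((pser (besselCoeff c) x - 1) / x) x := by
  refine (pser_hasDerivAt (abs_primCoeff_le hc) x).congr_deriv ?_
  rw [pser_eq_zero_add (abs_besselCoeff_le hc)]
  have e0 : besselCoeff c 0 = 1 := by simp [besselCoeff, poch_zero]
  rw [e0, add_sub_cancel_left, mul_div_cancel_left₀ _ hx]
  refine pser_congr (fun j => ?_) x
  rw [primCoeff, besselCoeff]; push_cast; field_simp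

lemma ein_hasDerivAt {x : ℝ} (hx : x ≠ 0) :
    HasDerivAt (pser einCoeff) ((Real.exp (-x) - 1) / x) x := by
  refine (pser_hasDerivAt abs_einCoeff_le x).congr_deriv ?_
  have hexp : Real.exp (-x) = pser (fun j => (-1) ^ j / (Nat.factorial j : ℝ)) x := by
    rw [Real.exp_eq_exp_ℝ, NormedSpace.exp_eq_tsum_div, pser]
    exact tsum_congr fun j => by rw [neg_pow]; ring
  rw [hexp, pser_eq_zero_add (a := fun j => (-1) ^ j / (Nat.factorial j : ℝ)) (M := 1)
    (fun j => by simp [abs_div])]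
  simp only [pow_zero, Nat.factorial_zero, Nat.cast_one, div_one]
  rw [add_sub_cancel_left, mul_div_cancel_left₀ _ hx]
  refine pser_congr (fun j => ?_) x
  rw [einCoeff]; push_cast; field_simp

/-- Raising the parameter by one, used both to gain decay and to return to the original parameter. -/
lemma prim_shift {c : ℝ} (hc : 1 / 2 ≤ c) (x : ℝ) :
    pser (primCoeff (c + 1)) x - pser (primCoeff c) x =
      -(1 / c) * (pser (besselCoeff (c + 1)) x - 1) := by
  have hc0 : 0 < c := by linarith
  have hc1 : 1 / 2 ≤ c + 1 := by linarith
  have s1 := (summable_nat_add_iff 1).2 (pser_summable (abs_primCoeff_le hc) x)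
  have s2 := (summable_nat_add_iff 1).2 (pser_summable (abs_primCoeff_le hc1) x)
  have e0 : besselCoeff (c + 1) 0 = 1 := by simp [besselCoeff, poch_zero]
  rw [pser, (pser_summable (abs_primCoeff_le hc1) x).tsum_eq_zero_add, pser,
    (pser_summable (abs_primCoeff_le hc) x).tsum_eq_zero_add, pser,
    (pser_summable (abs_besselCoeff_le hc1) x).tsum_eq_zero_add, e0]
  have p0 : ∀ d, primCoeff d 0 = 0 := fun d => by simp [primCoeff]
  simp only [p0, pow_zero, mul_one, zero_add, add_sub_cancel_left]
  rw [← s2.tsum_sub s1, ← tsum_mul_left]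
  refine tsum_congr fun j => ?_
  have hp := poch_pos (c := c + 1) (by linarith) (j + 1)
  have hj : (0 : ℝ) ≤ j := j.cast_nonneg
  have hq : poch c (j + 1) * (c + (j + 1)) = c * poch (c + 1) (j + 1) := by
    rw [← poch_succ_left, poch_succ_right c (j + 1)]; push_cast; ring
  have hq' : poch c (j + 1) = c * poch (c + 1) (j + 1) / (c + (j + 1)) := by
    rw [← hq]; field_simp
  rw [primCoeff, primCoeff, besselCoeff, hq']
  push_cast
  field_simp
  ring

/-! ### Decay and existence of the limit -/

/-- Decay from energy: for `y = ₀F₁(; c; -x)` the energy `x y' ^ 2 + y ^ 2` has derivative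
`(1 - 2 c) y' ^ 2 ≤ 0` and equals `1` at the origin, and `y' = -(1 / c) ₀F₁(; c + 1; -x)`. -/
lemma bessel_sq_le {c : ℝ} (hc : 1 / 2 ≤ c) {x : ℝ} (hx : 0 ≤ x) :
    x * pser (besselCoeff (c + 1)) x ^ 2 ≤ c ^ 2 := by
  have hc0 : 0 < c := by linarith
  -- the energy, written through the parameter c + 1 instead of the derivative
  set E : ℝ → ℝ := fun x => x * pser (besselCoeff (c + 1)) x ^ 2 / c ^ 2 + pser (besselCoeff c) x ^ 2
  have hE : ∀ y, HasDerivAt E ((1 - 2 * c) / c ^ 2 * pser (besselCoeff (c + 1)) y ^ 2) y := by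
    intro y
    have h1 := bessel_hasDerivAt (c := c + 1) (by linarith) y
    have h0 := bessel_hasDerivAt hc y
    refine ((((hasDerivAt_id y).mul (h1.pow 2)).div_const (c ^ 2)).add (h0.pow 2)).congr_deriv ?_
    have hk := bessel_contiguous hc y
    have e2 : c + 1 + 1 = c + 2 := by ring
    have hy : y * (-(1 / (c + 1)) * pser (besselCoeff (c + 2)) y) =
        -c * (pser (besselCoeff (c + 1)) y - pser (besselCoeff c) y) := by
      rw [mul_left_comm, hk]; field_simp
    simp only [id, e2, Pi.pow_apply, Nat.cast_ofNat, Nat.add_one_sub_one, pow_one, one_mul]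
    have : y * (2 * pser (besselCoeff (c + 1)) y * (-(1 / (c + 1)) * pser (besselCoeff (c + 2)) y)) =
        2 * pser (besselCoeff (c + 1)) y *
          (-c * (pser (besselCoeff (c + 1)) y - pser (besselCoeff c) y)) := by
      rw [← hy]; ring
    rw [this]
    field_simp
    ring
  have hanti : Antitone E := antitone_of_hasDerivAt_nonpos hE fun y =>
    mul_nonpos_of_nonpos_of_nonneg (div_nonpos_of_nonpos_of_nonneg (by linarith) (by positivity))
      (by positivity)
  have h := hanti hx
  have e0 : pser (besselCoeff c) 0 = 1 := by rw [pser_zero]; simp [besselCoeff, poch_zero]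
  simp only [E, e0, zero_mul, zero_div, zero_add, one_pow] at h
  have h' : x * pser (besselCoeff (c + 1)) x ^ 2 / c ^ 2 ≤ 1 := by
    linarith [sq_nonneg (pser (besselCoeff c) x)]
  rwa [div_le_one (by positivity)] at h'

lemma bessel_abs_le {c : ℝ} (hc : 1 / 2 ≤ c) {x : ℝ} (hx : 0 < x) :
    |pser (besselCoeff (c + 1)) x| ≤ c * x ^ (-(1 / 2) : ℝ) := by
  have hc0 : 0 < c := by linarith
  refine abs_le_of_sq_le_sq ?_ (by positivity)
  rw [mul_pow, ← Real.rpow_natCast, ← Real.rpow_natCast (x ^ _), ← Real.rpow_mul hx.le]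
  norm_num
  rw [Real.rpow_neg_one, ← div_eq_mul_inv, le_div_iff₀ hx, mul_comm]
  exact bessel_sq_le hc hx.le

lemma bessel_tendsto_zero {c : ℝ} (hc : 1 / 2 ≤ c) :
    Tendsto (pser (besselCoeff (c + 1))) atTop (𝓝 0) := by
  have h := (tendsto_rpow_neg_atTop (y := 1 / 2) (by norm_num)).const_mul c
  rw [mul_zero] at h
  refine squeeze_zero_norm' ?_ h
  filter_upwards [eventually_gt_atTop 0] with x hx
  exact bessel_abs_le hc hx

lemma pser_continuous {a : ℕ → ℝ} {M : ℝ} (h : ∀ j, |a j| ≤ M / (Nat.factorial j : ℝ)) :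
    Continuous (pser a) :=
  continuous_iff_continuousAt.2 fun x => (pser_hasDerivAt h x).continuousAt

/-- `F_c(x) + log x` has a limit. For the parameter `c + 1` its derivative is `O(x ^ (-3/2))`, hence
integrable at infinity; `prim_shift` then transfers the limit to `c`. At `c = 1/2` the derivative
itself is only conditionally integrable, which is why the shift is needed. -/
lemma exists_tendsto_prim_add_log {c : ℝ} (hc : 1 / 2 ≤ c) :
    ∃ L, Tendsto (fun x => pser (primCoeff c) x + Real.log x) atTop (𝓝 L) := by
  have hc0 : 0 < c := by linarith
  have hc1 : 1 / 2 ≤ c + 1 := by linarith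
  have hd : ∀ x ∈ Set.Ioi (1 : ℝ), HasDerivAt (fun x => pser (primCoeff (c + 1)) x + Real.log x)
      (pser (besselCoeff (c + 1)) x / x) x := by
    intro x hx
    have hx0 : x ≠ 0 := (zero_lt_one.trans hx).ne'
    refine ((prim_hasDerivAt hc1 hx0).add (Real.hasDerivAt_log hx0)).congr_deriv ?_
    field_simp
    ring
  have hint : IntegrableOn (fun x => pser (besselCoeff (c + 1)) x / x) (Set.Ioi 1) := by
    refine Integrable.mono'
      ((integrableOn_Ioi_rpow_of_lt (a := -(3 / 2)) (by norm_num) one_pos).const_mul c) ?_ ?_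
    · refine ContinuousOn.aestronglyMeasurable ?_ measurableSet_Ioi
      exact (pser_continuous (abs_besselCoeff_le hc1)).continuousOn.div continuousOn_id
        fun x hx => (zero_lt_one.trans hx).ne'
    · refine (ae_restrict_iff' measurableSet_Ioi).2 (Eventually.of_forall fun x hx => ?_)
      have hx0 : 0 < x := zero_lt_one.trans hx
      rw [norm_div, Real.norm_eq_abs, Real.norm_eq_abs, abs_of_pos hx0, div_le_iff₀ hx0, mul_assoc]
      refine (bessel_abs_le hc hx0).trans (le_of_eq ?_)
      rw [← Real.rpow_add_one hx0.ne']
      norm_num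
  have hlim := tendsto_limUnder_of_hasDerivAt_of_integrableOn_Ioi hd hint
  refine ⟨_, (hlim.add (((bessel_tendsto_zero hc).sub_const 1).const_mul (1 / c))).congr fun x => ?_⟩
  linarith [prim_shift hc x]

/-! ### Logarithmic Gamma integrals -/

/-- Euler's integral differentiated under the integral sign: `Γ'(s) = ∫ log t exp (-t) t ^ (s - 1) dt`,
with convergence. -/
lemma mellin_log_exp {s : ℝ} (hs : 0 < s) :
    IntegrableOn (fun t : ℝ => Real.log t * (Real.exp (-t) * t ^ (s - 1))) (Set.Ioi 0) ∧
      ∫ t in Set.Ioi (0 : ℝ), Real.log t * (Real.exp (-t) * t ^ (s - 1)) = deriv Real.Gamma s := by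
  have hs' : 0 < (s : ℂ).re := by simpa using hs
  have hcont : Continuous fun t : ℝ => ((Real.exp (-t) : ℝ) : ℂ) :=
    Complex.continuous_ofReal.comp (Real.continuous_exp.comp continuous_neg)
  have hM := mellin_hasDerivAt_of_isBigO_rpow (E := ℂ) (a := s + 1) (b := 0)
    (f := fun t : ℝ => ((Real.exp (-t) : ℝ) : ℂ)) (s := (s : ℂ))
    (hcont.continuousOn.locallyIntegrableOn measurableSet_Ioi)
    (by
      rw [← Asymptotics.isBigO_norm_left]
      simp_rw [Complex.norm_real, Asymptotics.isBigO_norm_left]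
      simpa only [neg_one_mul] using (isLittleO_exp_neg_mul_rpow_atTop zero_lt_one _).isBigO)
    (by simp)
    (by
      simp_rw [neg_zero, Real.rpow_zero]
      refine Asymptotics.isBigO_const_of_tendsto (?_ : Tendsto _ _ (𝓝 (1 : ℂ))) one_ne_zero
      rw [(by simp : (1 : ℂ) = Real.exp (-0))]
      exact hcont.continuousWithinAt)
    hs'
  have hcongr : ∀ t ∈ Set.Ioi (0 : ℝ),
      (t : ℂ) ^ ((s : ℂ) - 1) • (Real.log t • ((Real.exp (-t) : ℝ) : ℂ)) =
        ((Real.log t * (Real.exp (-t) * t ^ (s - 1)) : ℝ) : ℂ) := by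
    intro t ht
    have : (t : ℂ) ^ ((s : ℂ) - 1) = ((t ^ (s - 1) : ℝ) : ℂ) := by
      rw [Complex.ofReal_cpow (le_of_lt ht)]; simp
    rw [this, smul_eq_mul, Complex.real_smul]
    push_cast; ring
  refine ⟨?_, ?_⟩
  · have h1 := (integrableOn_congr_fun hcongr measurableSet_Ioi).1 hM.1
    have h2 := Integrable.re h1
    simp only [RCLike.re_eq_complex_re, Complex.ofReal_re] at h2
    exact h2
  · have h2 : HasDerivAt Complex.GammaIntegral
        ((∫ t in Set.Ioi (0 : ℝ), Real.log t * (Real.exp (-t) * t ^ (s - 1)) : ℝ) : ℂ) (s : ℂ) := by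
      rw [Complex.GammaIntegral_eq_mellin]
      refine hM.2.congr_deriv ?_
      rw [mellin, setIntegral_congr_fun measurableSet_Ioi hcongr]
      exact integral_complex_ofReal
    have h3 : HasDerivAt Complex.Gamma
        ((∫ t in Set.Ioi (0 : ℝ), Real.log t * (Real.exp (-t) * t ^ (s - 1)) : ℝ) : ℂ) (s : ℂ) := by
      refine h2.congr_of_eventuallyEq ?_
      filter_upwards [(isOpen_lt continuous_const Complex.continuous_re).mem_nhds hs'] with z hz
      exact Complex.Gamma_eq_integral hz
    have h4 := h3.real_of_complex
    simp only [Complex.Gamma_ofReal, Complex.ofReal_re] at h4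
    exact h4.deriv.symm

/-- `Ein(x) - log x → γ`: integrate `Γ'(1) = ∫ log t exp (-t) dt = -γ` by parts. -/
lemma ein_tendsto :
    Tendsto (fun x => pser einCoeff x + Real.log x) atTop (𝓝 (-Real.eulerMascheroniConstant)) := by
  obtain ⟨hI, hV⟩ := mellin_log_exp one_pos
  simp only [sub_self, Real.rpow_zero, mul_one] at hI hV
  -- an antiderivative of log x * exp (-x) that vanishes at the origin, because log 0 = 0
  set Φ : ℝ → ℝ := fun x => Real.log x * (1 - Real.exp (-x)) + pser einCoeff x
  have hd : ∀ x ∈ Set.Ioi (0 : ℝ), HasDerivAt Φ (Real.log x * Real.exp (-x)) x := by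
    intro x hx
    have hx0 : x ≠ 0 := (ne_of_gt hx)
    have he : HasDerivAt (fun x : ℝ => 1 - Real.exp (-x)) (Real.exp (-x)) x := by
      simpa using ((hasDerivAt_neg x).exp).const_sub 1
    refine (((Real.hasDerivAt_log hx0).mul he).add (ein_hasDerivAt hx0)).congr_deriv ?_
    field_simp
    ring
  have hlim := tendsto_limUnder_of_hasDerivAt_of_integrableOn_Ioi hd hI
  have h0 : Φ 0 = 0 := by simp [Φ, pser_zero, einCoeff]
  have hcont : ContinuousWithinAt Φ (Set.Ici 0) 0 := by
    refine ContinuousWithinAt.add ?_ (pser_continuous abs_einCoeff_le).continuousWithinAt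
    have hb : Tendsto (fun x : ℝ => |x * Real.log x|) (𝓝[Set.Ici 0] 0) (𝓝 0) := by
      have := (Real.continuous_mul_log.abs.tendsto 0).mono_left
        (nhdsWithin_le_nhds (s := Set.Ici 0))
      simpa using this
    have hz : Real.log 0 * (1 - Real.exp (-0)) = 0 := by simp
    rw [ContinuousWithinAt, hz]
    refine squeeze_zero_norm' ?_ hb
    filter_upwards [self_mem_nhdsWithin] with x hx
    have hx' : 0 ≤ x := hx
    have h1 : 0 ≤ 1 - Real.exp (-x) := by simpa using hx'
    have h2 : 1 - Real.exp (-x) ≤ x := by linarith [Real.add_one_le_exp (-x)]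
    rw [Real.norm_eq_abs, abs_mul, abs_mul, abs_of_nonneg h1, abs_of_nonneg hx', mul_comm]
    gcongr
  have hval := integral_Ioi_of_hasDerivAt_of_tendsto hcont hd hI hlim
  rw [hV, h0, sub_zero] at hval
  rw [← hval, ← neg_neg (deriv Real.Gamma 1), ← Real.eulerMascheroniConstant_eq_neg_deriv] at hlim
  have hle : Tendsto (fun x : ℝ => Real.log x * Real.exp (-x)) atTop (𝓝 0) := by
    have h := Real.tendsto_pow_mul_exp_neg_atTop_nhds_zero 1
    refine squeeze_zero_norm' ?_ h
    filter_upwards [eventually_ge_atTop 1] with x hx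
    rw [norm_mul, Real.norm_of_nonneg (Real.log_nonneg hx), Real.norm_of_nonneg (Real.exp_pos _).le,
      pow_one]
    gcongr
    linarith [Real.log_le_sub_one_of_pos (zero_lt_one.trans_le hx)]
  have := hlim.add hle
  rw [add_zero] at this
  refine this.congr fun x => ?_
  simp only [Φ]
  ring

/-! ### Identification of the limit -/

/-- Averaging `F_c(t y)` against the Gamma weight `exp (-y) y ^ (c - 1)` cancels the Pochhammer
symbols `(c)_j = Γ(c + j) / Γ(c)` and leaves `-Ein(t)`, independently of `c`. -/
lemma gamma_average_prim {c : ℝ} (hc : 1 / 2 ≤ c) (t : ℝ) :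
    ∫ y in Set.Ioi (0 : ℝ), pser (primCoeff c) (t * y) * (Real.exp (-y) * y ^ (c - 1)) =
      Real.Gamma c * pser einCoeff t := by
  have hc0 : 0 < c := by linarith
  have hterm : ∀ j : ℕ, ∀ y ∈ Set.Ioi (0 : ℝ),
      primCoeff c j * t ^ j * (Real.exp (-y) * y ^ (c + j - 1)) =
        primCoeff c j * (t * y) ^ j * (Real.exp (-y) * y ^ (c - 1)) := by
    intro j y hy
    have : c + j - 1 = (c - 1) + j := by ring
    rw [this, Real.rpow_add_natCast (ne_of_gt hy), mul_pow]
    ring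
  have hpos : ∀ j : ℕ, 0 < c + j := fun j => by positivity
  have hint : ∀ j : ℕ, Integrable (fun y => primCoeff c j * (t * y) ^ j *
      (Real.exp (-y) * y ^ (c - 1))) (volume.restrict (Set.Ioi 0)) := fun j =>
    (integrableOn_congr_fun (hterm j) measurableSet_Ioi).1
      ((Real.GammaIntegral_convergent (hpos j)).const_mul _)
  have hval : ∀ j : ℕ, primCoeff c j * Real.Gamma (c + j) = Real.Gamma c * einCoeff j := by
    intro j
    have := poch_pos hc0 j
    rw [Gamma_add_nat_eq_poch hc0, primCoeff, einCoeff]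
    rcases j with _ | j
    · simp
    · field_simp
  have hnorm : ∀ j : ℕ, ∫ y in Set.Ioi (0 : ℝ), ‖primCoeff c j * (t * y) ^ j *
      (Real.exp (-y) * y ^ (c - 1))‖ = Real.Gamma c * ‖einCoeff j * t ^ j‖ := by
    intro j
    have hG : 0 < Real.Gamma (c + j) := Real.Gamma_pos_of_pos (hpos j)
    have hG' : 0 < Real.Gamma c := Real.Gamma_pos_of_pos hc0
    have : ∀ y ∈ Set.Ioi (0 : ℝ), ‖primCoeff c j * (t * y) ^ j * (Real.exp (-y) * y ^ (c - 1))‖ =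
        ‖primCoeff c j * t ^ j‖ * (Real.exp (-y) * y ^ (c + j - 1)) := by
      intro y hy
      have hy' : 0 < y := hy
      rw [← hterm j y hy, norm_mul, Real.norm_of_nonneg (by positivity :
        0 ≤ Real.exp (-y) * y ^ (c + j - 1))]
    rw [setIntegral_congr_fun measurableSet_Ioi this, integral_const_mul,
      ← Real.Gamma_eq_integral (hpos j), ← Real.norm_of_nonneg hG.le, ← norm_mul, mul_right_comm,
      hval, mul_assoc, norm_mul, Real.norm_of_nonneg hG'.le]
  have hs := hasSum_integral_of_summable_integral_norm hint (by
    simp_rw [hnorm]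
    exact ((pser_summable abs_einCoeff_le t).norm).mul_left _)
  have hs' : ∀ j : ℕ, ∫ y in Set.Ioi (0 : ℝ), primCoeff c j * (t * y) ^ j *
      (Real.exp (-y) * y ^ (c - 1)) = Real.Gamma c * (einCoeff j * t ^ j) := by
    intro j
    rw [← setIntegral_congr_fun measurableSet_Ioi (hterm j), integral_const_mul,
      ← Real.Gamma_eq_integral (hpos j), mul_right_comm, hval]
    ring
  simp_rw [hs', tsum_mul_right] at hs
  rw [pser, ← tsum_mul_left]
  exact hs.tsum_eq.symm

/-- The domination, uniform in the dilation `t ≥ 1`, for the Abelian argument in `prim_tendsto`. -/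
lemma exists_bound_prim_add_log {c : ℝ} (hc : 1 / 2 ≤ c) :
    ∃ C, ∀ t : ℝ, 1 ≤ t → ∀ y : ℝ, 0 < y →
      |pser (primCoeff c) (t * y) + Real.log (t * y)| ≤ C + |Real.log y| := by
  obtain ⟨L, hL⟩ := exists_tendsto_prim_add_log hc
  have hev := (hL.abs.eventually_le_const (lt_add_one |L|)).and (eventually_ge_atTop 1)
  obtain ⟨X, hX⟩ := eventually_atTop.1 hev
  have hX1 : 1 ≤ X := (hX X le_rfl).2
  obtain ⟨B, hB⟩ := (isCompact_Icc (a := (0 : ℝ)) (b := X)).exists_bound_of_continuousOn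
    (pser_continuous (abs_primCoeff_le hc)).continuousOn
  have hB0 : 0 ≤ B := (norm_nonneg _).trans (hB 0 ⟨le_rfl, by linarith⟩)
  have hlX : 0 ≤ Real.log X := Real.log_nonneg hX1
  -- |L| + 1 bounds the sum beyond X, B bounds F on [0, X], log X bounds the logarithm on [1, X]; when
  -- t * y ≤ 1 the logarithm is bounded by |log y| since t ≥ 1
  refine ⟨|L| + 1 + B + Real.log X, fun t ht y hy => ?_⟩
  have hL0 := abs_nonneg L
  have hy0 := abs_nonneg (Real.log y)
  have hx : 0 < t * y := by positivity
  rcases le_total X (t * y) with h | h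
  · linarith [(hX _ h).1]
  · have hF : |pser (primCoeff c) (t * y)| ≤ B := hB _ ⟨hx.le, h⟩
    have htri := abs_add_le (pser (primCoeff c) (t * y)) (Real.log (t * y))
    rcases le_total 1 (t * y) with h1 | h1
    · have : |Real.log (t * y)| ≤ Real.log X := by
        rw [abs_of_nonneg (Real.log_nonneg h1)]
        exact Real.log_le_log hx h
      linarith
    · have hyx : y ≤ t * y := le_mul_of_one_le_left hy.le ht
      have : |Real.log (t * y)| ≤ |Real.log y| := by
        rw [abs_of_nonpos (Real.log_nonpos hx.le h1),
          abs_of_nonpos (Real.log_nonpos hy.le (hyx.trans h1))]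
        exact neg_le_neg (Real.log_le_log hy hyx)
      linarith

/-- The limit of `F_c(x) + log x` is identified by computing in two ways the limit, as `t → ∞`, of the
average of `F_c(t y) + log (t y)` over the Gamma weight. -/
lemma prim_tendsto {c : ℝ} (hc : 1 / 2 ≤ c) :
    Tendsto (fun x => pser (primCoeff c) x + Real.log x) atTop
      (𝓝 (digamma c - Real.eulerMascheroniConstant)) := by
  have hc0 : 0 < c := by linarith
  have hG : 0 < Real.Gamma c := Real.Gamma_pos_of_pos hc0
  obtain ⟨L, hL⟩ := exists_tendsto_prim_add_log hc
  obtain ⟨C, hC⟩ := exists_bound_prim_add_log hc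
  obtain ⟨hlogI, hlogV⟩ := mellin_log_exp hc0
  set w : ℝ → ℝ := fun y => Real.exp (-y) * y ^ (c - 1) with hw
  have hwI : IntegrableOn w (Set.Ioi 0) := Real.GammaIntegral_convergent hc0
  have hwV : ∫ y in Set.Ioi (0 : ℝ), w y = Real.Gamma c := (Real.Gamma_eq_integral hc0).symm
  have hw0 : ∀ y, 0 < y → 0 ≤ w y := fun y hy => by simp only [hw]; positivity
  have hbI : Integrable (fun y => C * w y + |Real.log y * w y|) (volume.restrict (Set.Ioi 0)) :=
    (hwI.const_mul C).add hlogI.abs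
  have hmeas : ∀ t : ℝ, AEStronglyMeasurable
      (fun y => (pser (primCoeff c) (t * y) + Real.log (t * y)) * w y)
      (volume.restrict (Set.Ioi 0)) := by
    intro t
    have h1 : Measurable (pser (primCoeff c)) := (pser_continuous (abs_primCoeff_le hc)).measurable
    have h2 : Measurable fun y => pser (primCoeff c) (t * y) + Real.log (t * y) :=
      (h1.comp (measurable_const_mul t)).add (Real.measurable_log.comp (measurable_const_mul t))
    exact h2.aestronglyMeasurable.mul hwI.aestronglyMeasurable
  have hbound : ∀ t : ℝ, 1 ≤ t → ∀ᵐ y ∂(volume.restrict (Set.Ioi (0 : ℝ))),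
      ‖(pser (primCoeff c) (t * y) + Real.log (t * y)) * w y‖ ≤ C * w y + |Real.log y * w y| := by
    intro t ht
    refine (ae_restrict_iff' measurableSet_Ioi).2 (Eventually.of_forall fun y hy => ?_)
    have h0 := hw0 y hy
    rw [norm_mul, Real.norm_eq_abs, Real.norm_of_nonneg h0, abs_mul, abs_of_nonneg h0, ← add_mul]
    exact mul_le_mul_of_nonneg_right (hC t ht y hy) h0
  have hDCT : Tendsto (fun t : ℝ => ∫ y in Set.Ioi (0 : ℝ),
      (pser (primCoeff c) (t * y) + Real.log (t * y)) * w y) atTop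
      (𝓝 (∫ y in Set.Ioi (0 : ℝ), L * w y)) := by
    refine tendsto_integral_filter_of_dominated_convergence _ (Eventually.of_forall hmeas)
      ((eventually_ge_atTop 1).mono hbound) hbI ?_
    refine (ae_restrict_iff' measurableSet_Ioi).2 (Eventually.of_forall fun y hy => ?_)
    exact (hL.comp (tendsto_id.atTop_mul_const hy)).mul_const (w y)
  rw [integral_const_mul, hwV] at hDCT
  have hexact : ∀ t : ℝ, 1 ≤ t → ∫ y in Set.Ioi (0 : ℝ),
      (pser (primCoeff c) (t * y) + Real.log (t * y)) * w y =
        Real.Gamma c * (pser einCoeff t + Real.log t) + deriv Real.Gamma c := by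
    intro t ht
    have hI : Integrable (fun y => (pser (primCoeff c) (t * y) + Real.log (t * y)) * w y)
        (volume.restrict (Set.Ioi 0)) := Integrable.mono' hbI (hmeas t) (hbound t ht)
    have hlI : Integrable (fun y => Real.log t * w y + Real.log y * w y)
        (volume.restrict (Set.Ioi 0)) := (hwI.const_mul _).add hlogI
    have hsub : ∫ y in Set.Ioi (0 : ℝ), ((pser (primCoeff c) (t * y) + Real.log (t * y)) * w y -
        (Real.log t * w y + Real.log y * w y)) = Real.Gamma c * pser einCoeff t := by
      rw [← gamma_average_prim hc t]
      refine setIntegral_congr_fun measurableSet_Ioi fun y hy => ?_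
      have hy' : y ≠ 0 := ne_of_gt hy
      simp only [Real.log_mul (by positivity : t ≠ 0) hy', hw]
      ring
    rw [integral_sub hI hlI, integral_add (hwI.const_mul _) hlogI, integral_const_mul, hwV,
      hlogV] at hsub
    linarith
  have hlim2 : Tendsto (fun t : ℝ => ∫ y in Set.Ioi (0 : ℝ),
      (pser (primCoeff c) (t * y) + Real.log (t * y)) * w y) atTop
      (𝓝 (Real.Gamma c * (-Real.eulerMascheroniConstant) + deriv Real.Gamma c)) := by
    refine ((ein_tendsto.const_mul (Real.Gamma c)).add_const (deriv Real.Gamma c)).congr' ?_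
    filter_upwards [eventually_ge_atTop 1] with t ht
    exact (hexact t ht).symm
  have huniq := tendsto_nhds_unique hDCT hlim2
  have : L = digamma c - Real.eulerMascheroniConstant := by
    rw [digamma]
    field_simp
    linarith
  rwa [← this]

/-- With `x = r² δ² / 4` the multiplier is `(4 c / δ²) F_c(x)`, after an index shift by one. -/
lemma neg_sq_mul_hyp2F3 {c δ : ℝ} (hc : 1 / 2 ≤ c) (hδ : 0 < δ) (r : ℝ) :
    -r ^ 2 * hyp2F3 1 1 2 (c + 1) 2 (-(r ^ 2 * δ ^ 2) / 4) =
      4 * c / δ ^ 2 * pser (primCoeff c) (r ^ 2 * δ ^ 2 / 4) := by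
  have hc0 : 0 < c := by linarith
  rw [pser_eq_zero_add (abs_primCoeff_le hc), hyp2F3, pser, ← tsum_mul_left, ← tsum_mul_left]
  have p0 : primCoeff c 0 = 0 := by simp [primCoeff]
  rw [p0, zero_add, ← tsum_mul_left]
  refine tsum_congr fun k => ?_
  have hp := poch_pos (c := c + 1) (by linarith) k
  rw [primCoeff, poch_one, poch_two, poch_succ_left, Nat.factorial_succ, neg_div, neg_pow]
  push_cast
  field_simp
  ring

/-- Asymptotic behavior of the multipliers in the critical case `β = n`:
with `m(r) = -r² ₂F₃(1, 1; 2, (n+2)/2, 2; -r²δ²/4)`,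
`m(r) + (2n/δ²)(2 log r + log(δ²/4) + γ - ψ(n/2)) → 0` as `r → ∞`,
where `γ` is the Euler–Mascheroni constant and `ψ` is the digamma function. -/
theorem multiplier_asymptotics_critical (n : ℕ) (hn : 1 ≤ n) (δ : ℝ) (hδ : 0 < δ) :
    Tendsto (fun r : ℝ =>
        (-r ^ 2 * hyp2F3 1 1 2 (((n : ℝ) + 2) / 2) 2 (-(r ^ 2 * δ ^ 2) / 4)) +
          (2 * (n : ℝ) / δ ^ 2) *
            (2 * Real.log r + Real.log (δ ^ 2 / 4) +
              Real.eulerMascheroniConstant - digamma ((n : ℝ) / 2)))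
      atTop (𝓝 0) := by
  have hc : 1 / 2 ≤ (n : ℝ) / 2 := by
    have : (1 : ℝ) ≤ n := by exact_mod_cast hn
    linarith
  have hx : Tendsto (fun r : ℝ => r ^ 2 * δ ^ 2 / 4) atTop atTop := by
    have := (tendsto_pow_atTop (α := ℝ) two_ne_zero).atTop_mul_const
      (by positivity : (0 : ℝ) < δ ^ 2 / 4)
    exact this.congr fun r => by ring
  have h := (((prim_tendsto hc).comp hx).sub_const
    (digamma ((n : ℝ) / 2) - Real.eulerMascheroniConstant)).const_mul (2 * (n : ℝ) / δ ^ 2)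
  rw [sub_self, mul_zero] at h
  refine h.congr' ?_
  filter_upwards [eventually_gt_atTop 0] with r hr
  have e : ((n : ℝ) + 2) / 2 = (n : ℝ) / 2 + 1 := by ring
  have hlog : Real.log (r ^ 2 * δ ^ 2 / 4) = 2 * Real.log r + Real.log (δ ^ 2 / 4) := by
    rw [mul_div_assoc, Real.log_mul (by positivity) (by positivity), Real.log_pow]
    push_cast; ring
  rw [e, neg_sq_mul_hyp2F3 hc hδ, Function.comp, hlog]
  ring
end

section
/- Let n ≥ 1 be an integer, δ > 0, β < n+1, and ν ∈ ℝⁿ. Then the complex exponential φ(x) = e^{i ν·x} is an eigenfunction of the nonlocal Laplacian with eigenvalue m(ν): for every x ∈ ℝⁿ, the function y ↦ (φ(y) − φ(x))/‖y−x‖^β is Lebesgue integrable on B_δ(x), and c^{δ,β} ∫_{B_δ(x)} (φ(y) − φ(x))/‖y−x‖^β dy = m(ν) φ(x), where m(ν) = c^{δ,β} ∫_{B_δ(0)} (cos(ν·z)−1)/‖z‖^β dz. -/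
/-!
Write `G(z) = (e^{iν·z} - 1)/‖z‖^β`. Since `φ(y) - φ(x) = φ(x)(e^{iν·(y-x)} - 1)`, the integrand at
`x` is `φ(x) G(y - x)`, so by translation invariance everything reduces to `G` on `B_δ(0)`.

* `G` is integrable there: `|e^{iν·z} - 1| ≤ ‖ν‖‖z‖`, and `‖z‖^{1-β}` is integrable on the ball
  because in polar coordinates it becomes `r^{n-β}` with `n - β > -1`.
* Reflection `z ↦ -z` preserves the ball and turns `G` into its complex conjugate, so `∫ G` is
  real, hence equal to `∫ Re G`, which is the integral of `(cos(ν·z) - 1)/‖z‖^β`.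
-/

open MeasureTheory Real
open scoped RealInnerProductSpace

/-- The Fourier multiplier of the nonlocal Laplacian `L^{δ,β}`. -/
noncomputable def nonlocalMultiplier (n : ℕ) (δ β : ℝ) (ν : EuclideanSpace ℝ (Fin n)) : ℝ :=
  (2 * ((n : ℝ) + 2 - β) * Real.Gamma ((n : ℝ) / 2 + 1) /
      (Real.pi ^ ((n : ℝ) / 2) * δ ^ ((n : ℝ) + 2 - β))) *
    ∫ z in Metric.ball (0 : EuclideanSpace ℝ (Fin n)) δ, (Real.cos ⟪ν, z⟫ - 1) / ‖z‖ ^ β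

/-- The integrand `(e^{iν·z} - 1)/‖z‖^β` of `L^{δ,β}` at the origin, applied to the exponential. -/
noncomputable def expKernel {n : ℕ} (β : ℝ) (ν z : EuclideanSpace ℝ (Fin n)) : ℂ :=
  (Complex.exp ((⟪ν, z⟫ : ℝ) * Complex.I) - 1) / ((‖z‖ ^ β : ℝ) : ℂ)

/-- Polar coordinates turn `‖z‖ / ‖z‖^β` into `r^{n-β}`, with exponent above `-1`. -/
lemma integrableOn_norm_div_rpow (n : ℕ) (hn : 1 ≤ n) (δ β : ℝ) (hδ : 0 < δ)
    (hβ : β < (n : ℝ) + 1) :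
    IntegrableOn (fun z : EuclideanSpace ℝ (Fin n) => ‖z‖ / ‖z‖ ^ β) (Metric.ball 0 δ) := by
  have : Nonempty (Fin n) := ⟨⟨0, hn⟩⟩
  have h := integrableOn_fun_norm_addHaar (E := EuclideanSpace ℝ (Fin n)) volume
    (f := fun r : ℝ => r / r ^ β) (r := δ)
  refine h.2 ?_
  have h2 : IntegrableOn (fun y : ℝ => y ^ ((n : ℝ) - β)) (Set.Ioo 0 δ) :=
    (intervalIntegral.integrableOn_Ioo_rpow_iff hδ).2 (by linarith)
  refine h2.congr_fun (fun y hy => ?_) measurableSet_Ioo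
  have hy0 : 0 < y := hy.1
  obtain ⟨k, rfl⟩ : ∃ k, n = k + 1 := ⟨n - 1, by omega⟩
  simp only [finrank_euclideanSpace, Fintype.card_fin, Nat.add_sub_cancel, smul_eq_mul]
  rw [Real.rpow_sub hy0, Real.rpow_natCast, pow_succ, mul_div_assoc]

lemma integrableOn_expKernel (n : ℕ) (hn : 1 ≤ n) (δ β : ℝ) (hδ : 0 < δ)
    (hβ : β < (n : ℝ) + 1) (ν : EuclideanSpace ℝ (Fin n)) :
    IntegrableOn (expKernel β ν) (Metric.ball 0 δ) := by
  refine ((integrableOn_norm_div_rpow n hn δ β hδ hβ).const_mul ‖ν‖).mono' ?_ ?_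
  · refine Measurable.aestronglyMeasurable ?_
    unfold expKernel
    fun_prop
  · refine Filter.Eventually.of_forall fun z => ?_
    have hpow : 0 ≤ ‖z‖ ^ β := Real.rpow_nonneg (norm_nonneg z) β
    have h1 : ‖Complex.exp ((⟪ν, z⟫ : ℝ) * Complex.I) - 1‖ ≤ ‖ν‖ * ‖z‖ := by
      rw [mul_comm]
      exact Real.norm_exp_I_mul_ofReal_sub_one_le.trans (norm_inner_le_norm ν z)
    rw [expKernel, norm_div, Complex.norm_real, Real.norm_of_nonneg hpow, ← mul_div_assoc]
    gcongr

lemma expKernel_neg {n : ℕ} (β : ℝ) (ν z : EuclideanSpace ℝ (Fin n)) :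
    expKernel β ν (-z) = (starRingEnd ℂ) (expKernel β ν z) := by
  simp [expKernel, ← Complex.exp_conj]

lemma expKernel_re {n : ℕ} (β : ℝ) (ν z : EuclideanSpace ℝ (Fin n)) :
    (expKernel β ν z).re = (Real.cos ⟪ν, z⟫ - 1) / ‖z‖ ^ β := by
  rw [expKernel, Complex.div_ofReal_re, Complex.sub_re, Complex.exp_ofReal_mul_I_re,
    Complex.one_re]

/-- The integral is real because reflection conjugates the integrand; only the cosine survives. -/
lemma integral_expKernel (n : ℕ) (hn : 1 ≤ n) (δ β : ℝ) (hδ : 0 < δ)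
    (hβ : β < (n : ℝ) + 1) (ν : EuclideanSpace ℝ (Fin n)) :
    ∫ z in Metric.ball 0 δ, expKernel β ν z =
      ((∫ z in Metric.ball (0 : EuclideanSpace ℝ (Fin n)) δ,
        (Real.cos ⟪ν, z⟫ - 1) / ‖z‖ ^ β : ℝ) : ℂ) := by
  have hpre : (fun z : EuclideanSpace ℝ (Fin n) => -z) ⁻¹' Metric.ball 0 δ = Metric.ball 0 δ := by
    ext z; simp
  have hrefl := (Measure.measurePreserving_neg
    (volume : Measure (EuclideanSpace ℝ (Fin n)))).setIntegral_preimage_emb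
    (MeasurableEquiv.neg _).measurableEmbedding (expKernel β ν) (Metric.ball 0 δ)
  simp only [Neg.neg] at hrefl
  have hconj : (starRingEnd ℂ) (∫ z in Metric.ball 0 δ, expKernel β ν z) =
      ∫ z in Metric.ball 0 δ, expKernel β ν z := by
    rw [← integral_conj]
    simp only [← expKernel_neg]
    conv_lhs => rw [← hpre]
    exact hrefl
  have hre := integral_re (integrableOn_expKernel n hn δ β hδ hβ ν)
  simp only [RCLike.re_eq_complex_re, expKernel_re] at hre
  rw [hre]
  exact (Complex.conj_eq_iff_re.1 hconj).symm

/-- With `φ(x) = e^{iν·x}`, the integrand of `L^{δ,β}φ(x)` is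
integrable on `B_δ(x)` for each `x`, and `φ` is an eigenfunction of the nonlocal
Laplacian with eigenvalue `m(ν)`:
`c^{δ,β} ∫_{B_δ(x)} (φ(y) - φ(x))/‖y-x‖^β dy = m(ν) φ(x)`. -/
theorem exponential_eigenfunction (n : ℕ) (hn : 1 ≤ n) (δ β : ℝ) (hδ : 0 < δ)
    (hβ : β < (n : ℝ) + 1) (ν : EuclideanSpace ℝ (Fin n))
    (φ : EuclideanSpace ℝ (Fin n) → ℂ)
    (hφ : ∀ x, φ x = Complex.exp ((⟪ν, x⟫ : ℝ) * Complex.I)) :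
    ∀ x : EuclideanSpace ℝ (Fin n),
      IntegrableOn (fun y => (φ y - φ x) / ((‖y - x‖ ^ β : ℝ) : ℂ)) (Metric.ball x δ) ∧
      ((2 * ((n : ℝ) + 2 - β) * Real.Gamma ((n : ℝ) / 2 + 1) /
          (Real.pi ^ ((n : ℝ) / 2) * δ ^ ((n : ℝ) + 2 - β)) : ℝ) : ℂ) *
        (∫ y in Metric.ball x δ, (φ y - φ x) / ((‖y - x‖ ^ β : ℝ) : ℂ)) =
        ((nonlocalMultiplier n δ β ν : ℝ) : ℂ) * φ x := by
  intro x
  have hpt : (fun y => (φ y - φ x) / ((‖y - x‖ ^ β : ℝ) : ℂ)) =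
      fun y => φ x * expKernel β ν (y - x) := by
    funext y
    have hy : φ y = φ x * Complex.exp ((⟪ν, y - x⟫ : ℝ) * Complex.I) := by
      rw [hφ, hφ, ← Complex.exp_add, inner_sub_right]
      congr 1
      push_cast
      ring
    rw [hy, expKernel]
    ring
  have hpre : (fun y => y - x) ⁻¹' Metric.ball 0 δ = Metric.ball x δ := by
    ext y; simp [dist_eq_norm]
  have hmp := measurePreserving_sub_right (volume : Measure (EuclideanSpace ℝ (Fin n))) x
  have hemb : MeasurableEmbedding (fun y : EuclideanSpace ℝ (Fin n) => y - x) :=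
    (MeasurableEquiv.subRight x).measurableEmbedding
  have hint := (hmp.integrableOn_comp_preimage hemb).2
    (integrableOn_expKernel n hn δ β hδ hβ ν)
  have hval := hmp.setIntegral_preimage_emb hemb (expKernel β ν) (Metric.ball 0 δ)
  rw [hpre] at hint hval
  rw [hpt]
  refine ⟨hint.const_mul (φ x), ?_⟩
  rw [integral_const_mul, hval, integral_expKernel n hn δ β hδ hβ ν, nonlocalMultiplier]
  push_cast
  ring
end
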